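/- Local Markov property for E-separation: for every directed graph G = (V, E_d) and every node v ∈ V, the triple (V \ pa_G(scc_G(v)), scc_G(v), pa_G(scc_G(v))) belongs to I_E^G, i.e., the strongly connected component of v is E-separated from everything outside the parents of the component, given those parents. -/

import Mathlib

namespace ESepPaper

/-- A directed mixed graph: directed edges and bidirected edges over a node type `V`.
A directed graph (DG) is a DMG with `Ebi = ∅`. -/
structure DMG (V : Type) where
  Ed : Set (V × V)
  Ebi : Set (Sym2 V)

variable {V : Type}

/-- `G.ancestor u v` : there is a directed path `u → … → v` (possibly trivial). -/
def DMG.ancestor (G : DMG V) : V → V → Prop :=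
  Relation.ReflTransGen (fun u v => (u, v) ∈ G.Ed)

/-- Ancestors of a set `C`. -/
def DMG.anc (G : DMG V) (C : Set V) : Set V := {u | ∃ v ∈ C, G.ancestor u v}

/-- Strongly connected component of `v`. -/
def DMG.scc (G : DMG V) (v : V) : Set V := {w | G.ancestor w v ∧ G.ancestor v w}

/-- Parents of a set of nodes. -/
def DMG.pa (G : DMG V) (S : Set V) : Set V := {w | ∃ v ∈ S, (w, v) ∈ G.Ed}

/-- Kind of a traversed edge on a walk: forward directed, backward directed, or bidirected. -/
inductive LinkType | fwd | bwd | bi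
deriving DecidableEq

/-- Validity of a link of kind `t` between consecutive walk nodes `u` and `v`. -/
def DMG.linkOK (G : DMG V) (u v : V) : LinkType → Prop
  | .fwd => (u, v) ∈ G.Ed
  | .bwd => (v, u) ∈ G.Ed
  | .bi => s(u, v) ∈ G.Ebi

/-- Arrowhead at the second (right) endpoint of the link. -/
def LinkType.headR : LinkType → Prop
  | .fwd => True
  | .bwd => False
  | .bi => True

/-- Arrowhead at the first (left) endpoint of the link. -/
def LinkType.headL : LinkType → Prop
  | .fwd => False
  | .bwd => True
  | .bi => True

/-- Tail at the second (right) endpoint. -/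
def LinkType.tailR (t : LinkType) : Prop := t = .bwd

/-- Tail at the first (left) endpoint. -/
def LinkType.tailL (t : LinkType) : Prop := t = .fwd

/-- Walks in a DMG. -/
inductive DMG.Walk (G : DMG V) : V → V → Type
  | nil (v : V) : DMG.Walk G v v
  | cons {u v w : V} (t : LinkType) (h : G.linkOK u v t) (p : DMG.Walk G v w) : DMG.Walk G u w

/-- An interior node on a walk, whose incoming link is `t1` and outgoing link is `t2`,
is a collider iff both links have an arrowhead at it. -/
def colliderAt (t1 t2 : LinkType) : Prop := t1.headR ∧ t2.headL

/-- An interior non-collider `v` between neighbours `u` (incoming link `t1`) and `w`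
(outgoing link `t2`) is unblockable: on every side where the link has a tail at `v`, the
corresponding neighbour lies in `scc_G(v)` (left-chain/right-chain/fork cases). -/
def unblockableAt (G : DMG V) (u v w : V) (t1 t2 : LinkType) : Prop :=
  (t1.tailR → u ∈ G.scc v) ∧ (t2.tailL → w ∈ G.scc v)

namespace DMG.Walk

variable {G : DMG V}

/-- First node of a walk. -/
def first {a b : V} (_ : G.Walk a b) : V := a

def length : {a b : V} → G.Walk a b → ℕ
  | _, _, .nil _ => 0
  | _, _, .cons _ _ p => p.length + 1

def support : {a b : V} → G.Walk a b → List V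
  | a, _, .nil _ => [a]
  | a, _, .cons _ _ p => a :: p.support

/-- Auxiliary: σ-openness of the remainder of a walk, where `u` is the previous node and
`t1` the link from `u` into the current first node. -/
def sigmaOpenAux (C : Set V) : (u : V) → LinkType → {b c : V} → G.Walk b c → Prop
  | _, _, _, _, .nil _ => True
  | u, t1, v, _, .cons t2 _ q =>
      ((colliderAt t1 t2 → v ∈ G.anc C) ∧
       (¬ colliderAt t1 t2 → ¬ unblockableAt G u v q.first t1 t2 → v ∉ C)) ∧
      sigmaOpenAux C v t2 q

/-- The walk is σ-open given `C`: every collider on it is an ancestor of a node of `C`, and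
no blockable non-collider on it lies in `C`. -/
def sigmaOpen (C : Set V) : {a b : V} → G.Walk a b → Prop
  | _, _, .nil _ => True
  | a, _, .cons t _ q => sigmaOpenAux C a t q

/-- All links are forward directed. -/
def IsDirected : {a b : V} → G.Walk a b → Prop
  | _, _, .nil _ => True
  | _, _, .cons t _ p => t = .fwd ∧ p.IsDirected

/-- Interior nodes of the walk (all nodes except the two endpoints). -/
def interior {a b : V} (p : G.Walk a b) : List V := p.support.tail.dropLast

/-- Arrowhead at the first endpoint. -/
def headAtStart : {a b : V} → G.Walk a b → Prop
  | _, _, .nil _ => False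
  | _, _, .cons t _ _ => t.headL

def headAtEndAux : LinkType → {a b : V} → G.Walk a b → Prop
  | t, _, _, .nil _ => t.headR
  | _, _, _, .cons t _ q => headAtEndAux t q

/-- Arrowhead at the last endpoint. -/
def headAtEnd : {a b : V} → G.Walk a b → Prop
  | _, _, .nil _ => False
  | _, _, .cons t _ q => headAtEndAux t q

def noCollidersAux : LinkType → {a b : V} → G.Walk a b → Prop
  | _, _, _, .nil _ => True
  | t1, _, _, .cons t2 _ q => ¬ colliderAt t1 t2 ∧ noCollidersAux t2 q

/-- There is no collider on the walk. -/
def NoColliders : {a b : V} → G.Walk a b → Prop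
  | _, _, .nil _ => True
  | _, _, .cons t _ q => noCollidersAux t q

def collidersInAux (S : Set V) : LinkType → {a b : V} → G.Walk a b → Prop
  | _, _, _, .nil _ => True
  | t1, v, _, .cons t2 _ q => (colliderAt t1 t2 → v ∈ S) ∧ collidersInAux S t2 q

/-- Every collider on the walk lies in `S`. -/
def CollidersIn (S : Set V) : {a b : V} → G.Walk a b → Prop
  | _, _, .nil _ => True
  | _, _, .cons t _ q => collidersInAux S t q

def noncollUnblAux : (u : V) → LinkType → {b c : V} → G.Walk b c → Prop
  | _, _, _, _, .nil _ => True
  | u, t1, v, _, .cons t2 _ q =>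
      (¬ colliderAt t1 t2 → unblockableAt G u v q.first t1 t2) ∧ noncollUnblAux v t2 q

/-- Every interior non-collider on the walk is unblockable. -/
def NoncollidersUnblockable : {a b : V} → G.Walk a b → Prop
  | _, _, .nil _ => True
  | a, _, .cons t _ q => noncollUnblAux a t q

/-- The set of edges occurring on a walk (directed edges as ordered pairs in `E_d`,
bidirected edges as unordered pairs). -/
def edges : {a b : V} → G.Walk a b → Set ((V × V) ⊕ Sym2 V)
  | _, _, .nil _ => ∅
  | a, _, .cons t _ p =>
      insert (match t with
        | .fwd => Sum.inl (a, p.first)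
        | .bwd => Sum.inl (p.first, a)
        | .bi => Sum.inr s(a, p.first)) p.edges

/-- Concatenation of walks. -/
def append : {a b c : V} → G.Walk a b → G.Walk b c → G.Walk a c
  | _, _, _, .nil _, q => q
  | _, _, _, .cons t h p, q => .cons t h (p.append q)

/-- A walk `v_0, …, v_{n+1}` is a path if no node besides the final endpoint occurs more
than once, i.e. `v_0, …, v_n` are pairwise distinct. -/
def IsPath {a b : V} (p : G.Walk a b) : Prop := p.support.dropLast.Nodup

end DMG.Walk

/-- `A` is σ-separated from `B` given `C` in `G`: every walk from a node of `A` to a node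
of `B` is σ-blocked given `C`. -/
def DMG.sigmaSep (G : DMG V) (A B C : Set V) : Prop :=
  ∀ a ∈ A, ∀ b ∈ B, ∀ p : G.Walk a b, ¬ p.sigmaOpen C

/-- The lifted dependency graph of `G`, on two copies of `V`
(`Sum.inl` is the past copy `V_0`, `Sum.inr` the future copy `V_1`). -/
def DMG.lift (G : DMG V) : DMG (V ⊕ V) where
  Ed := {e | ∃ u v, (u, v) ∈ G.Ed ∧
        (e = (Sum.inl u, Sum.inl v) ∨ e = (Sum.inl u, Sum.inr v) ∨
         e = (Sum.inr u, Sum.inr v))}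
  Ebi := {e | ∃ u v, s(u, v) ∈ G.Ebi ∧
        (e = s(Sum.inl u, Sum.inl v) ∨ e = s(Sum.inl u, Sum.inr v) ∨
         e = s(Sum.inr u, Sum.inl v) ∨ e = s(Sum.inr u, Sum.inr v))}

/-- `B` is E-separated from `A` given `C` in `G`:
`A_0` is σ-separated from `B_1` given `C_0 ∪ (C_1 \ B_1)` in the lifted dependency graph. -/
def DMG.ESep (G : DMG V) (A B C : Set V) : Prop :=
  G.lift.sigmaSep (Sum.inl '' A) (Sum.inr '' B)
    ((Sum.inl '' C) ∪ ((Sum.inr '' C) \ (Sum.inr '' B)))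

/-- The independence model `I_E^G` of E-separation triples. -/
def DMG.IE (G : DMG V) : Set (Set V × Set V × Set V) :=
  {t | G.ESep t.1 t.2.1 t.2.2}


/-- The latent projection of `G` onto the observed nodes `O`: a directed edge when there is
a non-trivial directed walk whose interior nodes are all latent, and a bidirected edge when
there is a non-trivial collider-free walk with arrowheads at both endpoints whose interior
nodes are all latent. -/
def DMG.latentProj (G : DMG V) (O : Set V) : DMG O where
  Ed := {e | ∃ p : G.Walk e.1.val e.2.val,
          p.IsDirected ∧ 0 < p.length ∧ ∀ x ∈ p.interior, x ∉ O}
  Ebi := {e | ∃ u v : O, e = s(u, v) ∧ ∃ p : G.Walk u.val v.val,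
          p.headAtStart ∧ p.headAtEnd ∧ p.NoColliders ∧ 0 < p.length ∧
          ∀ x ∈ p.interior, x ∉ O}

/-- The last edge of the walk `p` before entering `scc_G(w)` has an arrowhead at its
endpoint in `scc_G(w)` (vacuous if the walk never leaves `scc_G(w)`). -/
def DMG.lastEdgeInto (G : DMG V) {a b : V} (w : V) (p : G.Walk a b) : Prop :=
  (∀ x ∈ p.support, x ∈ G.scc w) ∨
  ∃ (x y : V) (t : LinkType) (h : G.linkOK x y t) (p₁ : G.Walk a x) (p₂ : G.Walk y b),
    p = p₁.append (.cons t h p₂) ∧ x ∉ G.scc w ∧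
    (∀ z ∈ p₂.support, z ∈ G.scc w) ∧ t.headR

/-- An (asymmetric) inducing path from `v` to `w`: a non-trivial path such that every
collider on it is an ancestor of `v` or `w`, every interior non-collider is unblockable,
and the last edge before entering `scc_G(w)` points into `scc_G(w)`. -/
def DMG.IsInducingPath (G : DMG V) {v w : V} (p : G.Walk v w) : Prop :=
  0 < p.length ∧ p.IsPath ∧
  p.CollidersIn (G.anc {v, w}) ∧ p.NoncollidersUnblockable ∧ G.lastEdgeInto w p

/-!
In an arbitrary directed mixed graph, let `T` be a convex set of nodes that no bidirected edge
touches, and condition on `pa(T) \ T`. Follow a walk that starts at a non-descendant of `T`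
outside `pa(T)`. It can meet the descendants of `T` only through an arrowhead, and from there it
can only move forward: a collider there would be an ancestor of `pa(T)`, hence of `T`, hence in `T`
by convexity. It cannot step forward into `T` either, since the node before `T` would be a
blockable non-collider in the conditioning set. So an open walk never reaches `T`.

In the lifted graph, the parents of `S_1` are `pa(S)_0 ∪ pa(S)_1`, so the conditioning set
`pa(S)_0 ∪ (pa(S)_1 \ S_1)` of E-separation is exactly `pa(S_1) \ S_1`. Moreover no node of `V_0`
descends from `S_1`, and convexity of `S` passes to `S_1`.
-/

namespace DMG

section ConvexSets

variable {G : DMG V} {T : Set V}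

/-- Descendants of a set `S`, including `S` itself. -/
def desc (G : DMG V) (S : Set V) : Set V := {w | ∃ v ∈ S, G.ancestor v w}

/-- `S` is convex for the ancestor preorder: no directed path leaves `S` and comes back. -/
def IsConvex (G : DMG V) (S : Set V) : Prop := G.desc S ∩ G.anc S ⊆ S

theorem subset_desc (G : DMG V) (S : Set V) : S ⊆ G.desc S :=
  fun x hx => ⟨x, hx, .refl⟩

theorem mem_desc_of_edge {x y : V} (hx : x ∈ G.desc T) (hxy : (x, y) ∈ G.Ed) : y ∈ G.desc T :=
  let ⟨s, hs, hsx⟩ := hx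
  ⟨s, hs, hsx.tail hxy⟩

theorem anc_pa_subset_anc (G : DMG V) (S : Set V) : G.anc (G.pa S) ⊆ G.anc S := by
  rintro x ⟨y, ⟨s, hs, hys⟩, hxy⟩
  exact ⟨s, hs, hxy.tail hys⟩

theorem anc_mono (G : DMG V) {S S' : Set V} (h : S ⊆ S') : G.anc S ⊆ G.anc S' :=
  fun _ ⟨s, hs, hxs⟩ => ⟨s, h hs, hxs⟩

theorem isConvex_scc (G : DMG V) (v : V) : G.IsConvex (G.scc v) := by
  rintro x ⟨⟨s, ⟨-, hvs⟩, hsx⟩, ⟨t, ⟨htv, -⟩, hxt⟩⟩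
  exact ⟨hxt.trans htv, hvs.trans hsx⟩

theorem IsConvex.mem_of_mem_scc (hT : G.IsConvex T) {x y : V} (hy : y ∈ T)
    (hyx : y ∈ G.scc x) : x ∈ T :=
  hT ⟨⟨y, hy, hyx.1⟩, ⟨y, hy, hyx.2⟩⟩

end ConvexSets

section SigmaSeparation

variable {G : DMG V} {T : Set V} {a b u w : V} {t t₁ t₂ : LinkType}

/-- Invariant of an open walk that avoids `T`: when it arrives at `w` along a link of kind `t`, then
`w` is outside `T`, and the link points into `w` if `w` descends from `T`. -/
def ArrivesOutside (G : DMG V) (T : Set V) (w : V) (t : LinkType) : Prop :=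
  w ∉ T ∧ (w ∈ G.desc T → t.headR)

theorem arrivesOutside_of_notMem_desc (hbi : ∀ e ∈ G.Ebi, ∀ x ∈ T, x ∉ e)
    (hlink : G.linkOK b w t) (hb : b ∉ G.desc T) (hfwd : t = .fwd → w ∉ T) :
    G.ArrivesOutside T w t := by
  cases t with
  | fwd => exact ⟨hfwd rfl, fun _ => trivial⟩
  | bwd =>
    have hw : w ∉ G.desc T := fun hw => hb (mem_desc_of_edge hw hlink)
    exact ⟨fun h => hw (G.subset_desc T h), fun h => absurd h hw⟩
  | bi => exact ⟨fun h => hbi _ hlink w h (Sym2.mem_mk_right b w), fun _ => trivial⟩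

theorem arrivesOutside_of_mem_desc (hT : G.IsConvex T) (hlink : G.linkOK b w t₂)
    (hb : G.ArrivesOutside T b t₁) (hdesc : b ∈ G.desc T)
    (hcol : colliderAt t₁ t₂ → b ∈ G.anc (G.pa T \ T)) : G.ArrivesOutside T w t₂ := by
  have notMem_anc : b ∉ G.anc T := fun h => hb.1 (hT ⟨hdesc, h⟩)
  have not_headL : ¬ t₂.headL := fun h => notMem_anc <|
    G.anc_pa_subset_anc T (G.anc_mono Set.sdiff_subset (hcol ⟨hb.2 hdesc, h⟩))
  cases t₂ with
  | fwd => exact ⟨fun hw => notMem_anc ⟨w, hw, .single hlink⟩, fun _ => trivial⟩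
  | bwd => exact absurd trivial not_headL
  | bi => exact absurd trivial not_headL

theorem ArrivesOutside.step (hT : G.IsConvex T) (hbi : ∀ e ∈ G.Ebi, ∀ x ∈ T, x ∉ e)
    (hlink : G.linkOK b w t₂) (hb : G.ArrivesOutside T b t₁)
    (hcol : colliderAt t₁ t₂ → b ∈ G.anc (G.pa T \ T))
    (hnoncol : ¬ colliderAt t₁ t₂ → ¬ unblockableAt G u b w t₁ t₂ → b ∉ G.pa T \ T) :
    G.ArrivesOutside T w t₂ := by
  by_cases hdesc : b ∈ G.desc T
  · exact arrivesOutside_of_mem_desc hT hlink hb hdesc hcol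
  · refine arrivesOutside_of_notMem_desc hbi hlink hdesc ?_
    rintro rfl hw
    have blockable : ¬ unblockableAt G u b w t₁ .fwd :=
      fun h => hb.1 (hT.mem_of_mem_scc hw (h.2 rfl))
    exact hnoncol (fun h => h.2) blockable ⟨⟨w, hw, hlink⟩, hb.1⟩

theorem ArrivesOutside.end_notMem (hT : G.IsConvex T) (hbi : ∀ e ∈ G.Ebi, ∀ x ∈ T, x ∉ e)
    (p : G.Walk a b) (ha : G.ArrivesOutside T a t)
    (hopen : p.sigmaOpenAux (G.pa T \ T) u t) : b ∉ T := by
  induction p generalizing u t with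
  | nil => exact ha.1
  | cons _ hlink _ ih =>
    obtain ⟨⟨hcol, hnoncol⟩, hrest⟩ := hopen
    exact ih (ha.step hT hbi hlink hcol hnoncol) hrest

theorem IsConvex.sigmaSep_pa (hT : G.IsConvex T) (hbi : ∀ e ∈ G.Ebi, ∀ x ∈ T, x ∉ e) :
    G.sigmaSep (G.desc T ∪ G.pa T)ᶜ T (G.pa T \ T) := by
  intro a ha b hb p hopen
  have hdesc : a ∉ G.desc T := fun h => ha (.inl h)
  have hpa : a ∉ G.pa T := fun h => ha (.inr h)
  cases p with
  | nil => exact hdesc (G.subset_desc T hb)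
  | @cons _ w _ t hlink q =>
    have hw : G.ArrivesOutside T w t := arrivesOutside_of_notMem_desc hbi hlink hdesc <| by
      rintro rfl hw
      exact hpa ⟨w, hw, hlink⟩
    exact hw.end_notMem hT hbi q hopen hb

theorem sigmaSep.mono_left {A A' B C : Set V} (h : G.sigmaSep A B C) (hA : A' ⊆ A) :
    G.sigmaSep A' B C :=
  fun a ha => h a (hA ha)

end SigmaSeparation

section Lift

variable {G : DMG V} {S : Set V}

theorem edge_of_lift_edge {x y : V ⊕ V} (h : (x, y) ∈ G.lift.Ed) :
    (Sum.elim id id x, Sum.elim id id y) ∈ G.Ed := by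
  obtain ⟨u, w, huw, h | h | h⟩ := h <;> cases h <;> exact huw

theorem ancestor_of_lift_ancestor {x y : V ⊕ V} (h : G.lift.ancestor x y) :
    G.ancestor (Sum.elim id id x) (Sum.elim id id y) :=
  Relation.ReflTransGen.lift _ (fun _ _ => edge_of_lift_edge) _ _ h

theorem mem_range_inr_of_lift_ancestor {x y : V ⊕ V} (h : G.lift.ancestor x y)
    (hx : x ∈ Set.range Sum.inr) : y ∈ Set.range Sum.inr := by
  induction h with
  | refl => exact hx
  | tail _ hedge ih =>
    obtain ⟨b, rfl⟩ := ih
    obtain ⟨u, w, -, h | h | h⟩ := hedge <;> cases h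
    exact ⟨w, rfl⟩

theorem lift_desc_image_inr_subset (G : DMG V) (S : Set V) :
    G.lift.desc (Sum.inr '' S) ⊆ Sum.inr '' G.desc S := by
  rintro x ⟨_, ⟨s, hs, rfl⟩, hsx⟩
  obtain ⟨y, rfl⟩ := mem_range_inr_of_lift_ancestor hsx ⟨s, rfl⟩
  exact ⟨y, ⟨s, hs, ancestor_of_lift_ancestor hsx⟩, rfl⟩

theorem IsConvex.lift_image_inr (hS : G.IsConvex S) : G.lift.IsConvex (Sum.inr '' S) := by
  rintro x ⟨hdesc, _, ⟨s, hs, rfl⟩, hxs⟩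
  obtain ⟨y, hy, rfl⟩ := G.lift_desc_image_inr_subset S hdesc
  exact ⟨y, hS ⟨hy, s, hs, ancestor_of_lift_ancestor hxs⟩, rfl⟩

theorem lift_pa_image_inr (G : DMG V) (S : Set V) :
    G.lift.pa (Sum.inr '' S) = Sum.inl '' G.pa S ∪ Sum.inr '' G.pa S := by
  ext x
  constructor
  · rintro ⟨_, ⟨s, hs, rfl⟩, u, w, huw, h | h | h⟩ <;> cases h
    · exact .inl ⟨u, ⟨s, hs, huw⟩, rfl⟩
    · exact .inr ⟨u, ⟨s, hs, huw⟩, rfl⟩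
  · rintro (⟨u, ⟨s, hs, hus⟩, rfl⟩ | ⟨u, ⟨s, hs, hus⟩, rfl⟩)
    · exact ⟨.inr s, ⟨s, hs, rfl⟩, u, s, hus, .inr (.inl rfl)⟩
    · exact ⟨.inr s, ⟨s, hs, rfl⟩, u, s, hus, .inr (.inr rfl)⟩

theorem lift_pa_image_inr_sdiff (G : DMG V) (S : Set V) :
    G.lift.pa (Sum.inr '' S) \ Sum.inr '' S =
      Sum.inl '' G.pa S ∪ (Sum.inr '' G.pa S \ Sum.inr '' S) := by
  have disjoint_copies : Disjoint (Sum.inl '' G.pa S) (Sum.inr '' S) :=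
    Set.disjoint_image_inl_image_inr
  rw [lift_pa_image_inr, Set.union_sdiff_distrib, disjoint_copies.sdiff_eq_left]

theorem map_mem_Ebi_of_mem_lift_Ebi {e : Sym2 (V ⊕ V)} (he : e ∈ G.lift.Ebi) :
    e.map (Sum.elim id id) ∈ G.Ebi := by
  obtain ⟨u, w, huw, rfl | rfl | rfl | rfl⟩ := he <;> exact huw

theorem notMem_of_mem_lift_Ebi (hbi : ∀ e ∈ G.Ebi, ∀ x ∈ S, x ∉ e) :
    ∀ e ∈ G.lift.Ebi, ∀ x ∈ Sum.inr '' S, x ∉ e := by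
  rintro e he _ ⟨s, hs, rfl⟩ hse
  exact hbi _ (map_mem_Ebi_of_mem_lift_Ebi he) s hs (Sym2.mem_map.2 ⟨_, hse, rfl⟩)

theorem image_inl_subset_compl_lift_desc_union_pa (G : DMG V) (S : Set V) :
    Sum.inl '' (Set.univ \ G.pa S) ⊆
      (G.lift.desc (Sum.inr '' S) ∪ G.lift.pa (Sum.inr '' S))ᶜ := by
  rintro _ ⟨a, ⟨-, ha⟩, rfl⟩ (hdesc | hpa)
  · obtain ⟨_, -, h⟩ := G.lift_desc_image_inr_subset S hdesc
    cases h
  · rw [lift_pa_image_inr] at hpa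
    obtain ⟨_, ha', h⟩ | ⟨_, -, h⟩ := hpa <;> cases h
    exact ha ha'

end Lift

end DMG

theorem local_markov_general (G : DMG V) {S : Set V} (hS : G.IsConvex S)
    (hbi : ∀ e ∈ G.Ebi, ∀ x ∈ S, x ∉ e) : (Set.univ \ G.pa S, S, G.pa S) ∈ G.IE := by
  have sep := hS.lift_image_inr.sigmaSep_pa (DMG.notMem_of_mem_lift_Ebi hbi)
  rw [DMG.lift_pa_image_inr_sdiff] at sep
  exact sep.mono_left (G.image_inl_subset_compl_lift_desc_union_pa S)

/-- Local Markov property for E-separation: the strongly connected component of `v` is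
E-separated from everything outside its parent set, given that parent set. -/
theorem local_markov {V : Type} [Fintype V] (G : DMG V) (hG : G.Ebi = ∅) (v : V) :
    (Set.univ \ G.pa (G.scc v), G.scc v, G.pa (G.scc v)) ∈ G.IE :=
  local_markov_general G (G.isConvex_scc v) (by simp [hG])

end ESepPaper
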